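/- Let 0 < ε < ρ < 1 and set a := ρ/(2−ρ) ∈ ℂ, regarded as a bounded operator on the one-dimensional Hilbert space ℂ. Then a belongs to the class C_ρ but a does not belong to the class C_{ρ−ε}. In particular, for 0 < ρ < ρ′ ≤ 1 the scalar classes satisfy C_ρ ⊊ C_{ρ′}. -/

import Mathlib

open ContinuousLinearMap

noncomputable section

/-- A unitary `ρ`-dilation of a single bounded operator `A` on a complex Hilbert space `X`:
a complex Hilbert space `Y`, a linear isometry `ι : X → Y`, and a unitary operator `U` on `Y`
such that `Aⁿ = ρ · ι* ∘ Uⁿ ∘ ι` for every integer `n ≥ 1`. -/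
structure UnitaryRhoDilation1 (ρ : ℝ) (X : Type*) [NormedAddCommGroup X]
    [InnerProductSpace ℂ X] [CompleteSpace X] (A : X →L[ℂ] X) where
  Y : Type
  [instN : NormedAddCommGroup Y]
  [instI : InnerProductSpace ℂ Y]
  [instC : CompleteSpace Y]
  ι : X →L[ℂ] Y
  isom : Isometry ι
  U : Y →L[ℂ] Y
  unit : U ∘L adjoint U = 1 ∧ adjoint U ∘L U = 1
  dil : ∀ n : ℕ, 1 ≤ n → A ^ n = (ρ : ℂ) • (adjoint ι ∘L ((U ^ n) ∘L ι))

/-- The class `C_ρ` of Sz.-Nagy and Foiaş: bounded operators admitting a unitary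
`ρ`-dilation. -/
def MemC1 (ρ : ℝ) {X : Type*} [NormedAddCommGroup X] [InnerProductSpace ℂ X]
    [CompleteSpace X] (A : X →L[ℂ] X) : Prop :=
  Nonempty (UnitaryRhoDilation1 ρ X A)

abbrev EllTwoZ := lp (fun _ : ℤ => ℂ) 2

lemma memlp_shift (m : ℤ) (f : ℤ → ℂ) (hf : Memℓp f 2) : Memℓp (fun k => f (k + m)) 2 := by
  rw [memℓp_gen_iff (by norm_num)] at hf ⊢
  exact (Equiv.addRight m).summable_iff (f := fun k => ‖f k‖ ^ (2 : ENNReal).toReal) |>.mpr hf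

def shiftLin (m : ℤ) : EllTwoZ →ₗ[ℂ] EllTwoZ where
  toFun f := ⟨fun k => f (k + m), memlp_shift m _ f.2⟩
  map_add' f g := by ext k; rfl
  map_smul' c f := by ext k; rfl

lemma shiftLin_apply (m : ℤ) (f : EllTwoZ) (k : ℤ) : shiftLin m f k = f (k + m) := rfl

def shiftZ : EllTwoZ ≃ₗᵢ[ℂ] EllTwoZ where
  toLinearEquiv := LinearEquiv.ofLinearMap (shiftLin 1) (shiftLin (-1))
    (by ext f k; simp [shiftLin_apply]) (by ext f k; simp [shiftLin_apply])
  norm_map' f := by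
    show ‖shiftLin 1 f‖ = ‖f‖
    rw [lp.norm_eq_tsum_rpow (by norm_num), lp.norm_eq_tsum_rpow (by norm_num)]
    congr 1
    exact (Equiv.addRight (1 : ℤ)).tsum_eq (fun k => ‖f k‖ ^ (2 : ENNReal).toReal)

lemma shiftZ_apply (f : EllTwoZ) (k : ℤ) : shiftZ f k = f (k + 1) := rfl

def shiftCLM : EllTwoZ →L[ℂ] EllTwoZ := (shiftZ.toContinuousLinearEquiv : EllTwoZ →L[ℂ] EllTwoZ)

lemma shiftCLM_apply (f : EllTwoZ) (k : ℤ) : shiftCLM f k = f (k + 1) := rfl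

lemma shiftCLM_pow (n : ℕ) (f : EllTwoZ) (k : ℤ) : (shiftCLM ^ n) f k = f (k + n) := by
  induction n generalizing k with
  | zero => simp
  | succ n ih =>
    rw [pow_succ', mul_apply_eq_comp, shiftCLM_apply, ih]
    rw [show k + 1 + (n : ℤ) = k + ((n + 1 : ℕ) : ℤ) by push_cast; ring]

lemma shiftCLM_unit : shiftCLM ∘L adjoint shiftCLM = 1 ∧ adjoint shiftCLM ∘L shiftCLM = 1 := by
  have h : adjoint shiftCLM = (shiftZ.symm.toContinuousLinearEquiv : EllTwoZ →L[ℂ] EllTwoZ) :=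
    LinearIsometryEquiv.adjoint_eq_symm shiftZ
  rw [h]
  constructor
  · ext1 f
    exact shiftZ.apply_symm_apply f
  · ext1 f
    exact shiftZ.symm_apply_apply f

/-- coefficient sequence -/
def seqE (c d : ℝ) (a : ℂ) (k : ℤ) : ℂ :=
  if k < 0 then 0 else if k = 0 then (c : ℂ) else d * a ^ k.toNat

lemma hasSum_seqE (c d : ℝ) (a : ℂ) (ha : ‖a‖ < 1) (n : ℕ) (hn : 1 ≤ n) :
    HasSum (fun k : ℤ => inner ℂ (seqE c d a k) (seqE c d a (k + n)))
      (a ^ n * ((c * d + d ^ 2 * (‖a‖ ^ 2 / (1 - ‖a‖ ^ 2)) : ℝ) : ℂ)) := by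
  have hinj : Function.Injective (fun k : ℕ => (k : ℤ)) := Nat.cast_injective
  rw [← hinj.hasSum_iff]
  · have hr : ‖a‖ ^ 2 < 1 := by nlinarith [norm_nonneg a]
    have h1 : HasSum (fun k : ℕ => (((‖a‖ ^ 2) ^ k : ℝ) : ℂ)) (((1 - ‖a‖ ^ 2)⁻¹ : ℝ) : ℂ) :=
      Complex.hasSum_ofReal.mpr (hasSum_geometric_of_lt_one (by positivity) hr)
    have h2 := (h1.mul_left (a ^ n * (d : ℂ) ^ 2)).add
      (hasSum_ite_eq (0 : ℕ) (a ^ n * (c * d - d ^ 2) : ℂ))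
    convert! h2 using 1
    · funext k
      have hk : ¬ ((k : ℤ) + n < 0) := by omega
      have hk2 : ¬ ((k : ℤ) + n = 0) := by omega
      have hk3 : ((k : ℤ) + n).toNat = k + n := by omega
      have hconj : (starRingEnd ℂ) a ^ k * a ^ k = ((‖a‖ : ℂ) ^ 2) ^ k := by
        rw [← mul_pow, mul_comm, Complex.mul_conj, Complex.normSq_eq_norm_sq]; push_cast; rfl
      rcases Nat.eq_zero_or_pos k with rfl | hpos
      · simp [seqE, show ¬ n = 0 by omega, show ¬ (n : ℤ) < 0 by omega]; ring
      · simp [seqE, hk, hk2, hk3, show ¬ k = 0 by omega, show ¬ (k : ℤ) < 0 by omega]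
        rw [← hconj]; ring
    · have : (1 - ‖a‖ ^ 2 : ℝ) ≠ 0 := by linarith
      have h3 : c * d + d ^ 2 * (‖a‖ ^ 2 / (1 - ‖a‖ ^ 2)) =
        d ^ 2 * (1 - ‖a‖ ^ 2)⁻¹ + (c * d - d ^ 2) := by field_simp; ring
      rw [h3]; push_cast; ring
  · intro x hx
    have : x < 0 := by
      by_contra h
      exact hx ⟨x.toNat, by simp; omega⟩
    simp [seqE, this]

lemma hasSum_seqE_norm (c d : ℝ) (a : ℂ) (ha : ‖a‖ < 1) :
    HasSum (fun k : ℤ => ‖seqE c d a k‖ ^ 2)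
      (c ^ 2 + d ^ 2 * (‖a‖ ^ 2 / (1 - ‖a‖ ^ 2)) : ℝ) := by
  have hinj : Function.Injective (fun k : ℕ => (k : ℤ)) := Nat.cast_injective
  rw [← hinj.hasSum_iff]
  · have hr : ‖a‖ ^ 2 < 1 := by nlinarith [norm_nonneg a]
    have h1 : HasSum (fun k : ℕ => (((‖a‖ ^ 2) ^ k : ℝ))) (((1 - ‖a‖ ^ 2)⁻¹ : ℝ)) :=
      (hasSum_geometric_of_lt_one (by positivity) hr)
    have h2 := (h1.mul_left (d ^ 2)).add
      (hasSum_ite_eq (0 : ℕ) (c ^ 2 - d ^ 2))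
    convert! h2 using 1
    · funext k
      rcases Nat.eq_zero_or_pos k with rfl | hpos
      · simp [seqE]
      · simp [seqE, show ¬ k = 0 by omega, show ¬ (k : ℤ) < 0 by omega]
        rw [mul_pow, sq_abs]; ring
    · have : (1 - ‖a‖ ^ 2 : ℝ) ≠ 0 := by linarith
      field_simp; ring
  · intro x hx
    have : x < 0 := by
      by_contra h
      exact hx ⟨x.toNat, by simp; omega⟩
    simp [seqE, this]

lemma exists_cd (r ρ : ℝ) (hr0 : 0 ≤ r) (hr : r < 1) (hρ : 0 < ρ) (h : r * (2 - ρ) ≤ ρ) :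
    ∃ c d : ℝ, c ^ 2 + d ^ 2 * (r ^ 2 / (1 - r ^ 2)) = 1 ∧
      c * d + d ^ 2 * (r ^ 2 / (1 - r ^ 2)) = 1 / ρ := by
  rcases hr0.eq_or_lt with rfl | hr0
  · exact ⟨1, 1 / ρ, by norm_num, by norm_num⟩
  have hpos : 0 < 1 - r ^ 2 := by nlinarith
  set s := r ^ 2 / (1 - r ^ 2) with hs
  have hs0 : 0 < s := by positivity
  set w := √((1 - r) / 2) with hw
  have hw2 : w ^ 2 = (1 - r) / 2 := Real.sq_sqrt (by linarith)
  have hw0 : 0 ≤ w := Real.sqrt_nonneg _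
  set D := w * (1 + r) / r with hD
  have hD0 : 0 ≤ D := by positivity
  have hD2 : D ^ 2 * s = (1 + r) / 2 := by
    have : D ^ 2 = (1 - r) / 2 * (1 + r) ^ 2 / r ^ 2 := by rw [hD, ← hw2]; ring
    rw [this, hs]; field_simp; ring
  have hcont : ContinuousOn (fun d : ℝ => √(1 - d ^ 2 * s) * d + d ^ 2 * s) (Set.Icc 0 D) := by
    fun_prop
  have hmem := intermediate_value_Icc hD0 hcont
  have : 1 / ρ ∈ Set.Icc ((fun d : ℝ => √(1 - d ^ 2 * s) * d + d ^ 2 * s) 0)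
      ((fun d : ℝ => √(1 - d ^ 2 * s) * d + d ^ 2 * s) D) := by
    constructor
    · simp; positivity
    · have e1 : √(1 - D ^ 2 * s) = w := by rw [hD2, hw]; congr 1; ring
      have e2 : w * D = (1 - r) / 2 * (1 + r) / r := by rw [hD, ← hw2]; ring
      simp only [e1]
      rw [e2, hD2]
      rw [show (1 - r) / 2 * (1 + r) / r + (1 + r) / 2 = (1 + r) / (2 * r) by field_simp; ring,
        div_le_div_iff₀ hρ (by positivity)]
      nlinarith
  obtain ⟨d, ⟨hd0, hd1⟩, hd⟩ := hmem this
  refine ⟨√(1 - d ^ 2 * s), d, ?_, hd⟩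
  have : d ^ 2 * s ≤ D ^ 2 * s := by gcongr
  rw [Real.sq_sqrt (by linarith)]; ring

lemma memC1_of_le (ρ : ℝ) (hρ : 0 < ρ) (a : ℂ) (ha : ‖a‖ < 1) (h : ‖a‖ * (2 - ρ) ≤ ρ) :
    MemC1 ρ (a • (1 : ℂ →L[ℂ] ℂ)) := by
  obtain ⟨c, d, h1, h2⟩ := exists_cd ‖a‖ ρ (norm_nonneg _) ha hρ h
  have hN := hasSum_seqE_norm c d a ha
  have hmem : Memℓp (seqE c d a) 2 := by
    rw [memℓp_gen_iff (by norm_num)]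
    simpa using hN.summable
  let e : EllTwoZ := ⟨seqE c d a, hmem⟩
  have he : ‖e‖ = 1 := by
    rw [lp.norm_eq_tsum_rpow (by norm_num)]
    have : (∑' i, ‖e i‖ ^ (2 : ENNReal).toReal) = 1 := by
      rw [← h1, ← hN.tsum_eq]
      simp [e]
    rw [this]; simp
  refine ⟨{ Y := EllTwoZ, ι := ContinuousLinearMap.toSpanSingleton ℂ e, isom := ?_,
            U := shiftCLM, unit := shiftCLM_unit, dil := ?_ }⟩
  · refine AddMonoidHomClass.isometry_of_norm _ fun x => ?_
    simp [ContinuousLinearMap.toSpanSingleton_apply, norm_smul, he]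
  · intro n hn
    have hin : inner ℂ e ((shiftCLM ^ n) e) = a ^ n * ((1 / ρ : ℝ) : ℂ) := by
      rw [← h2]
      refine (lp.hasSum_inner e ((shiftCLM ^ n) e)).unique ?_
      have := hasSum_seqE c d a ha n hn
      simp only [shiftCLM_pow]
      exact this
    have hρ' : (ρ : ℂ) ≠ 0 := by exact_mod_cast hρ.ne'
    ext
    rw [smul_pow, one_pow]
    simp only [smul_apply, ContinuousLinearMap.comp_apply,
      ContinuousLinearMap.adjoint_toSpanSingleton, ContinuousLinearMap.toSpanSingleton_apply,
      one_smul, innerSL_apply_apply, hin, smul_eq_mul]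
    push_cast
    field_simp
    exact mul_one _

lemma le_of_memC1 (ρ : ℝ) (hρ : 0 < ρ) (hρ1 : ρ < 1) (a : ℂ)
    (h : MemC1 ρ (a • (1 : ℂ →L[ℂ] ℂ))) : ‖a‖ < 1 ∧ ‖a‖ * (2 - ρ) ≤ ρ := by
  obtain ⟨Y, ι, isom, U, unit, dil⟩ := h
  have hρ' : (ρ : ℂ) ≠ 0 := by exact_mod_cast hρ.ne'
  set e : Y := ι 1 with he
  have hnι : ∀ x, ‖ι x‖ = ‖x‖ := fun x => by
    simpa using isom.dist_eq x 0
  have he1 : ‖e‖ = 1 := by rw [he, hnι]; simp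
  have hU : ∀ x, ‖U x‖ = ‖x‖ := by
    exact (ContinuousLinearMap.norm_map_iff_adjoint_comp_self U).mpr unit.2
  have hin : ∀ n : ℕ, 1 ≤ n → inner ℂ e ((U ^ n) e) = a ^ n / ρ := by
    intro n hn
    have h1 := congrArg (fun T : ℂ →L[ℂ] ℂ => T 1) (dil n hn)
    have h2 : inner ℂ (1 : ℂ) ((adjoint ι) ((U ^ n) (ι 1))) = inner ℂ e ((U ^ n) e) :=
      ContinuousLinearMap.adjoint_inner_right ι _ _
    have h3 : inner ℂ (1 : ℂ) ((adjoint ι) ((U ^ n) (ι 1))) = (adjoint ι) ((U ^ n) (ι 1)) := by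
      rw [RCLike.inner_apply]; simp only [map_one, mul_one]
    have h4 : a ^ n = ρ * (adjoint ι) ((U ^ n) (ι 1)) := by
      rw [smul_pow, one_pow] at h1
      exact (mul_one (a ^ n)).symm.trans h1
    rw [← h2, h3, h4]; field_simp
  have ha : ‖a‖ ≤ ρ := by
    have h1 := hin 1 le_rfl
    have h2 := norm_inner_le_norm (𝕜 := ℂ) e ((U ^ 1) e)
    rw [h1] at h2
    simp [hU, he1, abs_of_pos hρ] at h2
    rwa [div_le_one hρ] at h2
  refine ⟨by linarith, ?_⟩
  have key : ∀ t : ℝ, 0 ≤ t → t < 1 → t * ‖a‖ * (2 - ρ) ≤ ρ := by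
    intro t ht0 ht1
    rcases eq_or_ne a 0 with rfl | ha0
    · simp [hρ.le]
    have hna : 0 < ‖a‖ := norm_pos_iff.mpr ha0
    have hna' : (‖a‖ : ℂ) ≠ 0 := by exact_mod_cast hna.ne'
    set ζ : ℂ := -(t * (starRingEnd ℂ) a / ‖a‖) with hζ
    have hζn : ‖ζ‖ = t := by
      rw [hζ]; simp [abs_of_nonneg ht0]; field_simp
    have hζa : ζ * a = ((-(t * ‖a‖) : ℝ) : ℂ) := by
      have : (starRingEnd ℂ) a * a = (‖a‖ : ℂ) ^ 2 := by
        rw [mul_comm, Complex.mul_conj, Complex.normSq_eq_norm_sq]; push_cast; rfl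
      have h3 : ζ * a = -(t * ((starRingEnd ℂ) a * a) / ‖a‖) := by rw [hζ]; ring
      rw [h3, this]; push_cast; field_simp
    set T : Y →L[ℂ] Y := ζ • U with hT
    have hTn : ∀ x, ‖T x‖ = t * ‖x‖ := fun x => by simp [hT, norm_smul, hζn, hU]
    have hTk : ∀ k : ℕ, ‖(T ^ k) e‖ = t ^ k := by
      intro k
      induction k with
      | zero => simp [he1]
      | succ k ih => rw [pow_succ', mul_apply_eq_comp, hTn, ih, pow_succ']
    have hsum : Summable (fun k : ℕ => (T ^ k) e) :=
      Summable.of_norm (by simpa only [hTk] using summable_geometric_of_lt_one ht0 ht1)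
    obtain ⟨x, hx⟩ := hsum
    have hTx : T x = x - e := by
      have h1 := T.hasSum hx
      have h2 := (hasSum_nat_add_iff' 1).mpr hx
      simp only [Finset.sum_range_one, pow_zero] at h2
      change HasSum _ (x - e) at h2
      refine h1.unique ?_
      convert h2 using 1
      funext k
      rw [pow_succ', mul_apply_eq_comp]
    have hex : inner ℂ e x = (((1 + t * ‖a‖)⁻¹ / ρ + (1 - 1 / ρ) : ℝ) : ℂ) := by
      have h1 := (innerSL ℂ e).hasSum hx
      refine h1.unique ?_
      have hq : ‖ζ * a‖ < 1 := by
        rw [norm_mul, hζn]; nlinarith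
      have h2 := ((hasSum_geometric_of_norm_lt_one hq).mul_right ((ρ : ℂ)⁻¹)).add
        (hasSum_ite_eq (0 : ℕ) (1 - 1 / (ρ : ℂ)))
      convert! h2 using 1
      · funext k
        rcases Nat.eq_zero_or_pos k with rfl | hpos
        · simp [he1]
        · have h0 : ¬ k = 0 := by omega
          simp only [hT, smul_pow, innerSL_apply_apply, smul_apply, inner_smul_right, hin k hpos,
            if_neg h0]
          ring
      · rw [hζa]; push_cast; ring
    have h1 : ‖x - e‖ ^ 2 ≤ ‖x‖ ^ 2 := by
      rw [← hTx, hTn]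
      have : t * ‖x‖ ≤ ‖x‖ := by nlinarith [norm_nonneg x]
      have := mul_nonneg ht0 (norm_nonneg x)
      gcongr
    have h2 : ‖x - e‖ ^ 2 = ‖x‖ ^ 2 - 2 * ((1 + t * ‖a‖)⁻¹ / ρ + (1 - 1 / ρ)) + 1 := by
      rw [norm_sub_rev, norm_sub_sq (𝕜 := ℂ), hex, he1, RCLike.re_eq_complex_re,
        Complex.ofReal_re]; ring
    rw [h2] at h1
    have hq : 0 < 1 + t * ‖a‖ := by positivity
    have h3 : (1 + t * ‖a‖)⁻¹ / ρ + (1 - 1 / ρ) - 1 / 2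
        = (ρ - t * ‖a‖ * (2 - ρ)) / (2 * ρ * (1 + t * ‖a‖)) := by field_simp; ring
    have h4 : 0 ≤ (ρ - t * ‖a‖ * (2 - ρ)) / (2 * ρ * (1 + t * ‖a‖)) := by
      rw [← h3]; linarith
    have h5 : 0 < 2 * ρ * (1 + t * ‖a‖) := by positivity
    have := mul_nonneg h4 h5.le
    rw [div_mul_cancel₀ _ h5.ne'] at this
    linarith
  by_contra hcon
  push Not at hcon
  have hp : 0 < ‖a‖ * (2 - ρ) := hρ.trans hcon
  have hlt : ρ / (‖a‖ * (2 - ρ)) < 1 := by rwa [div_lt_one hp]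
  obtain ⟨t, ht, ht1⟩ := exists_between hlt
  have := key t (le_trans (by positivity) ht.le) ht1
  rw [div_lt_iff₀ hp] at ht
  nlinarith

lemma extremal_mem (ρ : ℝ) (hρ : 0 < ρ) (hρ1 : ρ < 1) (σ : ℝ) (hσ : ρ ≤ σ) :
    MemC1 σ (((ρ / (2 - ρ) : ℝ) : ℂ) • (1 : ℂ →L[ℂ] ℂ)) := by
  have h2 : 0 < 2 - ρ := by linarith
  have hn : ‖((ρ / (2 - ρ) : ℝ) : ℂ)‖ = ρ / (2 - ρ) := by
    rw [Complex.norm_real, Real.norm_of_nonneg (by positivity)]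
  apply memC1_of_le σ (by linarith)
  · rw [hn, div_lt_one h2]; linarith
  · rw [hn, div_mul_eq_mul_div, div_le_iff₀ h2]; nlinarith

lemma extremal_not_mem (ρ : ℝ) (hρ1 : ρ < 1) (σ : ℝ) (hσ0 : 0 < σ) (hσ : σ < ρ) :
    ¬ MemC1 σ (((ρ / (2 - ρ) : ℝ) : ℂ) • (1 : ℂ →L[ℂ] ℂ)) := by
  intro h
  have hρ : 0 < ρ := by linarith
  have h2 : 0 < 2 - ρ := by linarith
  have hn : ‖((ρ / (2 - ρ) : ℝ) : ℂ)‖ = ρ / (2 - ρ) := by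
    rw [Complex.norm_real, Real.norm_of_nonneg (by positivity)]
  have := (le_of_memC1 σ hσ0 (by linarith) _ h).2
  rw [hn, div_mul_eq_mul_div, div_le_iff₀ h2] at this
  nlinarith

/-- for `0 < ε < ρ < 1`, the scalar `a = ρ/(2−ρ)`, regarded as an operator on
the one-dimensional Hilbert space `ℂ`, belongs to `C_ρ` but not to `C_{ρ−ε}`.  In particular,
for `0 < ρ₀ < ρ₁ ≤ 1` the scalar classes satisfy `C_{ρ₀} ⊊ C_{ρ₁}`. -/
theorem scalar_memC1_strict (ε ρ : ℝ) (hε : 0 < ε) (hερ : ε < ρ) (hρ : ρ < 1) :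
    (MemC1 ρ (((ρ / (2 - ρ) : ℝ) : ℂ) • (1 : ℂ →L[ℂ] ℂ)) ∧
      ¬ MemC1 (ρ - ε) (((ρ / (2 - ρ) : ℝ) : ℂ) • (1 : ℂ →L[ℂ] ℂ))) ∧
    (∀ ρ₀ ρ₁ : ℝ, 0 < ρ₀ → ρ₀ < ρ₁ → ρ₁ ≤ 1 →
      (∀ a : ℂ, MemC1 ρ₀ (a • (1 : ℂ →L[ℂ] ℂ)) → MemC1 ρ₁ (a • (1 : ℂ →L[ℂ] ℂ))) ∧
      ∃ a : ℂ, MemC1 ρ₁ (a • (1 : ℂ →L[ℂ] ℂ)) ∧ ¬ MemC1 ρ₀ (a • (1 : ℂ →L[ℂ] ℂ))) := by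
  refine ⟨⟨extremal_mem ρ (by linarith) hρ ρ le_rfl,
    extremal_not_mem ρ hρ (ρ - ε) (by linarith) (by linarith)⟩, ?_⟩
  intro ρ₀ ρ₁ h0 h01 h1
  refine ⟨fun a ha => ?_, ?_⟩
  · obtain ⟨h2, h3⟩ := le_of_memC1 ρ₀ h0 (by linarith) a ha
    exact memC1_of_le ρ₁ (by linarith) a h2 (by nlinarith [norm_nonneg a])
  · obtain ⟨σ, hσ0, hσ1⟩ := exists_between h01
    exact ⟨_, extremal_mem σ (by linarith) (by linarith) ρ₁ hσ1.le,
      extremal_not_mem σ (by linarith) ρ₀ h0 hσ0⟩
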